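/- Let N ≥ 3 and let t > max{N, 2N/(N−2)}. Then there exists a constant C(t) > 0 such that every φ ∈ X satisfies ‖φ‖_∞ ≤ C(t) ‖∇φ‖_{L²(ℝ^N)}^{2/t} (1 + ‖∇φ‖_{L²(ℝ^N)}^{2/N}), where ‖φ‖_∞ = sup_{x∈ℝ^N} |φ(x)|. -/

import Mathlib

open MeasureTheory Metric Set Filter Topology

noncomputable section

abbrev Euc (N : ℕ) := EuclideanSpace ℝ (Fin N)

/-- The set `X` of admissible potentials: Lipschitz with constant 1, vanishing at
infinity, with square-integrable (a.e.-defined) gradient. -/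
def memX (N : ℕ) (φ : Euc N → ℝ) : Prop :=
  LipschitzWith 1 φ ∧ Tendsto φ (cocompact (Euc N)) (𝓝 0) ∧
    Integrable (fun x => ‖gradient φ x‖ ^ 2) (volume : Measure (Euc N))

/-- The `L²`-norm of the gradient. -/
def gradNorm2 (N : ℕ) (φ : Euc N → ℝ) : ℝ :=
  (∫ x, ‖gradient φ x‖ ^ 2) ^ (1 / 2 : ℝ)

/-!
A function that vanishes at infinity and has height `m` on the sphere of radius `a` around `x` must
descend to `0` along every ray from `x`. By the Cauchy-Schwarz inequality with weight `r ^ (d - 1)`,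
whose inverse is integrable at infinity once `d ≥ 3`, each descent costs a radial energy of at least
`(d - 2) * a ^ (d - 2) * m ^ 2`; integrating over all directions in polar coordinates bounds
`‖∇φ‖₂ ^ 2` from below. A `K`-Lipschitz `φ` has height at least `m = |φ x| / 2` on the sphere of
radius `a = m / K`, so that `|φ x| ^ d ≤ C * ‖∇φ‖₂ ^ 2`. Finally, `G ^ (2 / d)` is at most
`G ^ (2 / t)` if `G ≤ 1`, and at most `G ^ (2 / t) * G ^ (2 / d)` if `G ≥ 1`.
-/

open Module
open scoped ENNReal NNReal

section Radial

lemma enorm_sub_le_lintegral_enorm_deriv_Ioi {f : ℝ → ℝ} {a l : ℝ}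
    (hf : ∀ R, a ≤ R → AbsolutelyContinuousOnInterval f a R) (hl : Tendsto f atTop (𝓝 l)) :
    ‖l - f a‖ₑ ≤ ∫⁻ r in Ioi a, ‖deriv f r‖ₑ := by
  have hlim : Tendsto (fun R => ‖f R - f a‖ₑ) atTop (𝓝 ‖l - f a‖ₑ) := (hl.sub_const _).enorm
  refine le_of_tendsto hlim ?_
  filter_upwards [eventually_ge_atTop a] with R hR
  calc ‖f R - f a‖ₑ = ‖∫ r in Ioc a R, deriv f r‖ₑ := by
        rw [← (hf R hR).integral_deriv_eq_sub, intervalIntegral.integral_of_le hR]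
    _ ≤ ∫⁻ r in Ioc a R, ‖deriv f r‖ₑ := enorm_integral_le_lintegral_enorm _
    _ ≤ ∫⁻ r in Ioi a, ‖deriv f r‖ₑ := lintegral_mono_set Ioc_subset_Ioi_self

lemma sq_lintegral_le_lintegral_inv_mul_lintegral_mul_sq {α : Type*} [MeasurableSpace α]
    {μ : Measure α} {w g : α → ℝ≥0∞} (hw : AEMeasurable w μ) (hg : AEMeasurable g μ)
    (hw_zero : ∀ᵐ x ∂μ, w x ≠ 0) (hw_top : ∀ᵐ x ∂μ, w x ≠ ∞) :
    (∫⁻ x, g x ∂μ) ^ 2 ≤ (∫⁻ x, (w x)⁻¹ ∂μ) * ∫⁻ x, w x * g x ^ 2 ∂μ := by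
  have hsplit : ∀ᵐ x ∂μ, g x = (w x)⁻¹ ^ (1 / 2 : ℝ) * (w x * g x ^ 2) ^ (1 / 2 : ℝ) := by
    filter_upwards [hw_zero, hw_top] with x h0 htop
    rw [← ENNReal.mul_rpow_of_nonneg _ _ (by norm_num), ← mul_assoc,
      ENNReal.inv_mul_cancel h0 htop, one_mul, ← ENNReal.rpow_natCast, ← ENNReal.rpow_mul]
    norm_num
  have hhalf (y : ℝ≥0∞) : (y ^ (1 / 2 : ℝ)) ^ 2 = y := by
    rw [← ENNReal.rpow_natCast, ← ENNReal.rpow_mul]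
    norm_num
  calc (∫⁻ x, g x ∂μ) ^ 2
      = (∫⁻ x, (w x)⁻¹ ^ (1 / 2 : ℝ) * (w x * g x ^ 2) ^ (1 / 2 : ℝ) ∂μ) ^ 2 := by
        rw [lintegral_congr_ae hsplit]
    _ ≤ ((∫⁻ x, (w x)⁻¹ ∂μ) ^ (1 / 2 : ℝ) * (∫⁻ x, w x * g x ^ 2 ∂μ) ^ (1 / 2 : ℝ)) ^ 2 := by
        gcongr
        exact ENNReal.lintegral_mul_norm_pow_le hw.inv (hw.mul (hg.pow_const 2))
          (by norm_num) (by norm_num) (by norm_num)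
    _ = (∫⁻ x, (w x)⁻¹ ∂μ) * ∫⁻ x, w x * g x ^ 2 ∂μ := by rw [mul_pow, hhalf, hhalf]

lemma lintegral_Ioi_rpow_neg {a p : ℝ} (ha : 0 < a) (hp : 1 < p) :
    ∫⁻ r in Ioi a, ENNReal.ofReal (r ^ (-p)) = ENNReal.ofReal (a ^ (1 - p) / (p - 1)) := by
  rw [← ofReal_integral_eq_lintegral_ofReal (integrableOn_Ioi_rpow_of_lt (by linarith) ha)]
  · rw [integral_Ioi_rpow_of_lt (by linarith) ha, neg_div, ← div_neg, neg_add_rev, neg_neg,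
      neg_add_eq_sub, neg_add_eq_sub]
  · filter_upwards [ae_restrict_mem measurableSet_Ioi] with r hr
    exact Real.rpow_nonneg (ha.trans hr).le _

lemma sq_le_lintegral_rpow_mul_sq_deriv_Ioi {f : ℝ → ℝ} {a p : ℝ} (ha : 0 < a) (hp : 1 < p)
    (hf : ∀ R, a ≤ R → AbsolutelyContinuousOnInterval f a R) (hlim : Tendsto f atTop (𝓝 0)) :
    ENNReal.ofReal ((p - 1) * a ^ (p - 1) * f a ^ 2) ≤
      ∫⁻ r in Ioi a, ENNReal.ofReal (r ^ p) * ‖deriv f r‖ₑ ^ 2 := by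
  have hc : 0 < a ^ (1 - p) / (p - 1) := div_pos (by positivity) (by linarith)
  have hinv : ∫⁻ r in Ioi a, (ENNReal.ofReal (r ^ p))⁻¹ =
      ENNReal.ofReal (a ^ (1 - p) / (p - 1)) := by
    rw [← lintegral_Ioi_rpow_neg ha hp]
    refine setLIntegral_congr_fun measurableSet_Ioi fun r hr => ?_
    have hr0 : 0 < r := ha.trans hr
    simp only [Real.rpow_neg hr0.le, ENNReal.ofReal_inv_of_pos (Real.rpow_pos_of_pos hr0 p)]
  have hsq : ENNReal.ofReal (f a ^ 2) ≤ ENNReal.ofReal (a ^ (1 - p) / (p - 1)) *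
      ∫⁻ r in Ioi a, ENNReal.ofReal (r ^ p) * ‖deriv f r‖ₑ ^ 2 := by
    calc ENNReal.ofReal (f a ^ 2) = ‖0 - f a‖ₑ ^ 2 := by
          rw [zero_sub, enorm_neg, ← enorm_pow, Real.enorm_of_nonneg (sq_nonneg _)]
      _ ≤ (∫⁻ r in Ioi a, ‖deriv f r‖ₑ) ^ 2 := by
          gcongr
          exact enorm_sub_le_lintegral_enorm_deriv_Ioi hf hlim
      _ ≤ _ := by
          rw [← hinv]
          refine sq_lintegral_le_lintegral_inv_mul_lintegral_mul_sq
            (by fun_prop) (by fun_prop) ?_ (ae_of_all _ fun _ => ENNReal.ofReal_ne_top)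
          filter_upwards [ae_restrict_mem measurableSet_Ioi] with r hr
          exact (ENNReal.ofReal_pos.2 (Real.rpow_pos_of_pos (ha.trans hr) p)).ne'
  have hfactor : (p - 1) * a ^ (p - 1) * f a ^ 2 = f a ^ 2 / (a ^ (1 - p) / (p - 1)) := by
    rw [← neg_sub p 1, Real.rpow_neg ha.le]
    field_simp
  rw [hfactor, ENNReal.ofReal_div_of_pos hc]
  exact ENNReal.div_le_of_le_mul' hsq

end Radial

section Polar

variable {E : Type*} [NormedAddCommGroup E] [NormedSpace ℝ E] [FiniteDimensional ℝ E]
  [MeasurableSpace E] [BorelSpace E] (μ : Measure E) [μ.IsAddHaarMeasure]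

lemma lintegral_eq_lintegral_sphere_lintegral_Ioi [Nontrivial E] {F : E → ℝ≥0∞}
    (hF : Measurable F) :
    ∫⁻ y, F y ∂μ = ∫⁻ w : sphere (0 : E) 1, (∫⁻ r in Ioi (0 : ℝ),
      ENNReal.ofReal (r ^ (finrank ℝ E - 1)) * F (r • (w : E))) ∂μ.toSphere := by
  let G : sphere (0 : E) 1 × Ioi (0 : ℝ) → ℝ≥0∞ := fun p => F ((p.2 : ℝ) • (p.1 : E))
  have hG : Measurable G := hF.comp (by fun_prop)
  have hG_polar (y : ({0}ᶜ : Set E)) : F y = G (homeomorphUnitSphereProd E y) := by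
    have hy : ‖(y : E)‖ ≠ 0 := norm_ne_zero_iff.2 y.2
    simp [G, smul_smul, hy]
  calc ∫⁻ y, F y ∂μ = ∫⁻ y : ({0}ᶜ : Set E), F y ∂(μ.comap (↑)) := by
        rw [lintegral_subtype_comap (measurableSet_singleton _).compl, restrict_compl_singleton]
    _ = ∫⁻ p, G p ∂(μ.toSphere.prod (.volumeIoiPow (finrank ℝ E - 1))) := by
        simp only [hG_polar]
        exact μ.measurePreserving_homeomorphUnitSphereProd.lintegral_comp hG
    _ = ∫⁻ w : sphere (0 : E) 1, (∫⁻ r, G (w, r) ∂(.volumeIoiPow (finrank ℝ E - 1)))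
          ∂μ.toSphere := lintegral_prod _ hG.aemeasurable
    _ = _ := by
        refine lintegral_congr fun w => ?_
        have hGw : Measurable fun r => G (w, r) := hG.comp measurable_prodMk_left
        rw [Measure.volumeIoiPow, lintegral_withDensity_eq_lintegral_mul _ (by fun_prop) hGw]
        exact lintegral_subtype_comap measurableSet_Ioi
          fun r : ℝ => ENNReal.ofReal (r ^ (finrank ℝ E - 1)) * F (r • (w : E))

lemma mul_toSphere_univ_le_lintegral [Nontrivial E] {F : E → ℝ≥0∞} {c : ℝ≥0∞} (hF : Measurable F)
    (hc : ∀ᵐ w : sphere (0 : E) 1 ∂μ.toSphere, c ≤ ∫⁻ r in Ioi (0 : ℝ),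
      ENNReal.ofReal (r ^ (finrank ℝ E - 1)) * F (r • (w : E))) :
    c * μ.toSphere univ ≤ ∫⁻ y, F y ∂μ := by
  rw [lintegral_eq_lintegral_sphere_lintegral_Ioi μ hF, ← lintegral_const]
  exact lintegral_mono_ae hc

lemma ae_toSphere_ae_Ioi_of_ae [Nontrivial E] {p : E → Prop} (hp : ∀ᵐ y ∂μ, p y) :
    ∀ᵐ w : sphere (0 : E) 1 ∂μ.toSphere, ∀ᵐ r ∂volume.restrict (Ioi (0 : ℝ)),
      p (r • (w : E)) := by
  set s := toMeasurable μ {y | ¬ p y}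
  have hs_meas : MeasurableSet s := measurableSet_toMeasurable _ _
  have hF : Measurable (s.indicator (1 : E → ℝ≥0∞)) := measurable_one.indicator hs_meas
  have hzero := lintegral_eq_lintegral_sphere_lintegral_Ioi μ hF
  rw [lintegral_indicator_one hs_meas, measure_toMeasurable, ae_iff.1 hp, eq_comm,
    lintegral_eq_zero_iff (Measurable.lintegral_prod_right (by fun_prop))] at hzero
  filter_upwards [hzero] with w hw
  have hw' := (lintegral_eq_zero_iff (by fun_prop)).1 hw
  filter_upwards [hw', ae_restrict_mem measurableSet_Ioi] with r hr hr0
  by_contra hpr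
  have hmem : r • (w : E) ∈ s := subset_toMeasurable μ _ hpr
  have hpos : 0 < r ^ (finrank ℝ E - 1) := pow_pos hr0 _
  simp [hmem, hpos.not_ge] at hr

end Polar

section Ray

variable {E : Type*} [NormedAddCommGroup E] [NormedSpace ℝ E]

lemma tendsto_add_smul_cobounded (x : E) {w : E} (hw : w ≠ 0) :
    Tendsto (fun r : ℝ => x + r • w) atTop (Bornology.cobounded E) := by
  refine (tendsto_const_add_cobounded x).comp (tendsto_norm_atTop_iff_cobounded.1 ?_)
  simp only [norm_smul, Real.norm_eq_abs]
  exact tendsto_abs_atTop_atTop.atTop_mul_const (norm_pos_iff.2 hw)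

lemma lipschitzWith_add_smul (x w : E) : LipschitzWith ‖w‖₊ fun r : ℝ => x + r • w :=
  LipschitzWith.of_dist_le_mul fun r s => by
    rw [dist_add_left, dist_eq_norm, ← sub_smul, norm_smul, dist_eq_norm, mul_comm, coe_nnnorm]

lemma enorm_deriv_comp_add_smul_le {φ : E → ℝ} {x w : E} {r : ℝ} (hw : ‖w‖ = 1)
    (hφ : DifferentiableAt ℝ φ (x + r • w)) :
    ‖deriv (fun s : ℝ => φ (x + s • w)) r‖ₑ ≤ ‖fderiv ℝ φ (x + r • w)‖ₑ := by
  have hline : HasDerivAt (fun s : ℝ => x + s • w) w r := by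
    simpa using ((hasDerivAt_id r).smul_const w).const_add x
  have hderiv : deriv (fun s : ℝ => φ (x + s • w)) r = fderiv ℝ φ (x + r • w) w :=
    (hφ.hasFDerivAt.comp_hasDerivAt r hline).deriv
  rw [hderiv, enorm_le_iff_norm_le]
  simpa [hw] using (fderiv ℝ φ (x + r • w)).le_opNorm w

lemma sq_le_lintegral_ray_pow_mul_sq_fderiv {φ : E → ℝ} {K : ℝ≥0} {x w : E} {a : ℝ} {n : ℕ}
    (hφ : LipschitzWith K φ) (hlim : Tendsto φ (Bornology.cobounded E) (𝓝 0)) (hw : ‖w‖ = 1)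
    (hdiff : ∀ᵐ r ∂volume.restrict (Ioi (0 : ℝ)), DifferentiableAt ℝ φ (x + r • w))
    (ha : 0 < a) (hn : 2 ≤ n) :
    ENNReal.ofReal (((n : ℝ) - 1) * a ^ (n - 1) * φ (x + a • w) ^ 2) ≤
      ∫⁻ r in Ioi (0 : ℝ), ENNReal.ofReal (r ^ n) * ‖fderiv ℝ φ (x + r • w)‖ₑ ^ 2 := by
  have hw0 : w ≠ 0 := norm_ne_zero_iff.1 (by simp [hw])
  have hray : LipschitzWith (K * ‖w‖₊) fun r : ℝ => φ (x + r • w) :=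
    hφ.comp (lipschitzWith_add_smul x w)
  have hradial := sq_le_lintegral_rpow_mul_sq_deriv_Ioi (p := n) ha (by exact_mod_cast hn)
    (fun R _ => (hray.lipschitzOnWith (s := uIcc a R)).absolutelyContinuousOnInterval)
    (hlim.comp (tendsto_add_smul_cobounded x hw0))
  calc ENNReal.ofReal (((n : ℝ) - 1) * a ^ (n - 1) * φ (x + a • w) ^ 2)
      ≤ ∫⁻ r in Ioi a, ENNReal.ofReal (r ^ n) * ‖deriv (fun s : ℝ => φ (x + s • w)) r‖ₑ ^ 2 := by
        simpa only [← Nat.cast_pred (show 0 < n by omega), Real.rpow_natCast] using hradial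
    _ ≤ ∫⁻ r in Ioi 0, ENNReal.ofReal (r ^ n) * ‖deriv (fun s : ℝ => φ (x + s • w)) r‖ₑ ^ 2 :=
        lintegral_mono_set (Ioi_subset_Ioi ha.le)
    _ ≤ ∫⁻ r in Ioi 0, ENNReal.ofReal (r ^ n) * ‖fderiv ℝ φ (x + r • w)‖ₑ ^ 2 := by
        refine lintegral_mono_ae ?_
        filter_upwards [hdiff] with r hr
        gcongr
        exact enorm_deriv_comp_add_smul_le hw hr

end Ray

lemma rpow_le_rpow_mul_one_add_rpow {G p q : ℝ} (hG : 0 ≤ G) (hp : 0 ≤ p) (hpq : p ≤ q) :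
    G ^ q ≤ G ^ p * (1 + G ^ q) := by
  have hGp : 0 ≤ G ^ p := Real.rpow_nonneg hG p
  have hGq : 0 ≤ G ^ q := Real.rpow_nonneg hG q
  rcases le_total G 1 with hG1 | hG1
  · calc G ^ q ≤ G ^ p :=
          Real.rpow_le_rpow_of_exponent_ge_of_imp hG hG1 hpq fun _ hq => by linarith
      _ ≤ G ^ p * (1 + G ^ q) := le_mul_of_one_le_right hGp (by linarith)
  · calc G ^ q ≤ 1 + G ^ q := by linarith
      _ ≤ G ^ p * (1 + G ^ q) := le_mul_of_one_le_left (by positivity) (Real.one_le_rpow hG1 hp)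

section Capacity

variable {E : Type*} [NormedAddCommGroup E] [NormedSpace ℝ E] [FiniteDimensional ℝ E]
  [MeasurableSpace E] [BorelSpace E] (μ : Measure E) [μ.IsAddHaarMeasure]

/-- For a Euclidean norm, `(d - 2) * a ^ (d - 2)` times the area of the unit sphere is the Newtonian
capacity of a sphere of radius `a`. -/
theorem sphere_capacity_mul_sq_le_lintegral_sq_fderiv {φ : E → ℝ} {K : ℝ≥0} {x : E} {a m : ℝ}
    (hE : 3 ≤ finrank ℝ E) (hφ : LipschitzWith K φ)
    (hlim : Tendsto φ (Bornology.cobounded E) (𝓝 0)) (ha : 0 < a) (hm0 : 0 ≤ m)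
    (hm : ∀ y ∈ sphere x a, m ≤ |φ y|) :
    ENNReal.ofReal (((finrank ℝ E : ℝ) - 2) * a ^ (finrank ℝ E - 2) * m ^ 2) *
      μ.toSphere univ ≤ ∫⁻ y, ‖fderiv ℝ φ y‖ₑ ^ 2 ∂μ := by
  have : Nontrivial E := Module.nontrivial_of_finrank_pos (R := ℝ) (by omega)
  have hd2 : (0 : ℝ) ≤ finrank ℝ E - 2 :=
    sub_nonneg.2 (by exact_mod_cast (by omega : 2 ≤ finrank ℝ E))
  have hmeas : Measurable fun y => ‖fderiv ℝ φ (x + y)‖ₑ ^ 2 :=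
    ((measurable_fderiv ℝ φ).comp (measurable_const_add x)).enorm.pow_const 2
  have hdiff : ∀ᵐ y ∂μ, DifferentiableAt ℝ φ (x + y) :=
    (measurePreserving_add_left μ x).quasiMeasurePreserving.ae hφ.ae_differentiableAt
  rw [← lintegral_add_left_eq_self (μ := μ) (fun y => ‖fderiv ℝ φ y‖ₑ ^ 2) x]
  refine mul_toSphere_univ_le_lintegral μ hmeas ?_
  filter_upwards [ae_toSphere_ae_Ioi_of_ae μ hdiff] with w hw_diff
  have hw : ‖(w : E)‖ = 1 := norm_eq_of_mem_sphere w
  have hmw : m ≤ |φ (x + a • (w : E))| := hm _ (by simp [norm_smul, hw, ha.le])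
  refine le_trans (ENNReal.ofReal_le_ofReal ?_)
    (sq_le_lintegral_ray_pow_mul_sq_fderiv hφ hlim hw hw_diff ha (by omega))
  rw [← sq_abs (φ _), Nat.cast_pred (by omega), Nat.sub_sub, sub_sub, one_add_one_eq_two,
    one_add_one_eq_two]
  gcongr

lemma mul_half_abs_pow_finrank_le_mul_integral_sq_fderiv {φ : E → ℝ} {K : ℝ≥0}
    (hE : 3 ≤ finrank ℝ E) (hK : 0 < K) (hφ : LipschitzWith K φ)
    (hlim : Tendsto φ (Bornology.cobounded E) (𝓝 0))
    (hint : Integrable (fun y => ‖fderiv ℝ φ y‖ ^ 2) μ) (x : E) :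
    ((finrank ℝ E : ℝ) - 2) * μ.toSphere.real univ * (|φ x| / 2) ^ finrank ℝ E ≤
      K ^ (finrank ℝ E - 2) * ∫ y, ‖fderiv ℝ φ y‖ ^ 2 ∂μ := by
  set d := finrank ℝ E
  have hd2 : (0 : ℝ) ≤ d - 2 := sub_nonneg.2 (by exact_mod_cast (by omega : 2 ≤ d))
  have hI0 : 0 ≤ ∫ y, ‖fderiv ℝ φ y‖ ^ 2 ∂μ := integral_nonneg fun _ => by positivity
  rcases (abs_nonneg (φ x)).eq_or_lt with h0 | hpos
  · rw [← h0, zero_div, zero_pow (by omega), mul_zero]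
    positivity
  obtain ⟨m, hm⟩ : ∃ m, m = |φ x| / 2 := ⟨_, rfl⟩
  have hm0 : 0 < m := hm ▸ half_pos hpos
  rw [← hm]
  have hsphere : ∀ y ∈ sphere x (m / K), m ≤ |φ y| := by
    intro y hy
    have hosc : |φ x - φ y| ≤ m := by
      have := hφ.dist_le_mul x y
      rwa [dist_comm x, mem_sphere.1 hy, mul_div_cancel₀ _ (by positivity), Real.dist_eq] at this
    linarith [abs_sub_abs_le_abs_sub (φ x) (φ y)]
  have hcap := sphere_capacity_mul_sq_le_lintegral_sq_fderiv μ hE hφ hlim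
    (by positivity) hm0.le hsphere
  have henergy : ∫⁻ y, ‖fderiv ℝ φ y‖ₑ ^ 2 ∂μ =
      ENNReal.ofReal (∫ y, ‖fderiv ℝ φ y‖ ^ 2 ∂μ) := by
    rw [ofReal_integral_eq_lintegral_ofReal hint (ae_of_all _ fun _ => by positivity)]
    simp only [ENNReal.ofReal_pow (norm_nonneg _), ofReal_norm]
  rw [henergy, ← ofReal_measureReal, ← ENNReal.ofReal_mul (by positivity),
    ENNReal.ofReal_le_ofReal_iff hI0] at hcap
  calc ((d : ℝ) - 2) * μ.toSphere.real univ * m ^ d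
      = K ^ (d - 2) * (((d : ℝ) - 2) * (m / K) ^ (d - 2) * m ^ 2 * μ.toSphere.real univ) := by
        rw [show m ^ d = m ^ (d - 2) * m ^ 2 by rw [← pow_add]; congr 1; omega, div_pow]
        field_simp
    _ ≤ (K : ℝ) ^ (d - 2) * ∫ y, ‖fderiv ℝ φ y‖ ^ 2 ∂μ := by gcongr

theorem exists_abs_le_mul_integral_sq_fderiv_rpow (hE : 3 ≤ finrank ℝ E) (K : ℝ≥0) :
    ∃ C : ℝ, 0 < C ∧ ∀ φ : E → ℝ, LipschitzWith K φ → Tendsto φ (Bornology.cobounded E) (𝓝 0) →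
      Integrable (fun y => ‖fderiv ℝ φ y‖ ^ 2) μ → ∀ x,
        |φ x| ≤ C * (∫ y, ‖fderiv ℝ φ y‖ ^ 2 ∂μ) ^ (1 / (finrank ℝ E : ℝ)) := by
  have : Nontrivial E := Module.nontrivial_of_finrank_pos (R := ℝ) (by omega)
  set d := finrank ℝ E
  set c : ℝ := (d - 2) * μ.toSphere.real univ
  set L : ℝ≥0 := max K 1
  have hL0 : 0 < L := zero_lt_one.trans_le (le_max_right K 1)
  have hσ : 0 < μ.toSphere.real univ :=
    ENNReal.toReal_pos (Measure.measure_univ_ne_zero.2 μ.toSphere_ne_zero) (measure_ne_top _ _)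
  have hc0 : 0 < c := mul_pos (sub_pos.2 (by exact_mod_cast hE)) hσ
  refine ⟨2 * (L ^ (d - 2) / c) ^ (1 / (d : ℝ)), by positivity, fun φ hφ hlim hint x => ?_⟩
  have hI0 : 0 ≤ ∫ y, ‖fderiv ℝ φ y‖ ^ 2 ∂μ := integral_nonneg fun _ => by positivity
  have hpow : (|φ x| / 2) ^ d ≤ L ^ (d - 2) / c * ∫ y, ‖fderiv ℝ φ y‖ ^ 2 ∂μ := by
    rw [div_mul_eq_mul_div, le_div_iff₀' hc0]
    exact mul_half_abs_pow_finrank_le_mul_integral_sq_fderiv μ hE hL0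
      (hφ.weaken (le_max_left K 1)) hlim hint x
  have hroot := Real.rpow_le_rpow (by positivity) hpow (by positivity : 0 ≤ 1 / (d : ℝ))
  rw [one_div, Real.pow_rpow_inv_natCast (by positivity) (by omega),
    Real.mul_rpow (by positivity) hI0] at hroot
  rw [one_div]
  linarith

theorem stmt_1_general (hE : 3 ≤ finrank ℝ E) (K : ℝ≥0) :
    ∃ C : ℝ, 0 < C ∧ ∀ t : ℝ, finrank ℝ E ≤ t → ∀ φ : E → ℝ, LipschitzWith K φ →
      Tendsto φ (cocompact E) (𝓝 0) → Integrable (fun y => ‖fderiv ℝ φ y‖ ^ 2) μ → ∀ x,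
        |φ x| ≤ C * ((∫ y, ‖fderiv ℝ φ y‖ ^ 2 ∂μ) ^ (1 / 2 : ℝ)) ^ (2 / t) *
          (1 + ((∫ y, ‖fderiv ℝ φ y‖ ^ 2 ∂μ) ^ (1 / 2 : ℝ)) ^ (2 / (finrank ℝ E : ℝ))) := by
  obtain ⟨C, hC, hbound⟩ := exists_abs_le_mul_integral_sq_fderiv_rpow μ hE K
  refine ⟨C, hC, fun t ht φ hφ hlim hint x => ?_⟩
  have hd : (0 : ℝ) < finrank ℝ E := by exact_mod_cast (by omega : 0 < finrank ℝ E)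
  set I := ∫ y, ‖fderiv ℝ φ y‖ ^ 2 ∂μ
  have hI : 0 ≤ I := integral_nonneg fun _ => by positivity
  set G := I ^ (1 / 2 : ℝ) with hG
  have hIG : I ^ (1 / (finrank ℝ E : ℝ)) = G ^ (2 / (finrank ℝ E : ℝ)) := by
    rw [hG, ← Real.rpow_mul hI]
    congr 1
    field_simp
  calc |φ x| ≤ C * G ^ (2 / (finrank ℝ E : ℝ)) :=
        hIG ▸ hbound φ hφ (cobounded_eq_cocompact (α := E) ▸ hlim) hint x
    _ ≤ C * (G ^ (2 / t) * (1 + G ^ (2 / (finrank ℝ E : ℝ)))) := by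
        have ht0 : 0 < t := hd.trans_le ht
        gcongr
        exact rpow_le_rpow_mul_one_add_rpow (by positivity) (by positivity) (by gcongr)
    _ = C * G ^ (2 / t) * (1 + G ^ (2 / (finrank ℝ E : ℝ))) := (mul_assoc _ _ _).symm

end Capacity

lemma norm_gradient {F : Type*} [NormedAddCommGroup F] [InnerProductSpace ℝ F] [CompleteSpace F]
    (φ : F → ℝ) (y : F) : ‖gradient φ y‖ = ‖fderiv ℝ φ y‖ :=
  LinearIsometryEquiv.norm_map _ _

/-- For `N ≥ 3` and `t > max{N, 2N/(N−2)}` there is a constant `C(t) > 0` such that every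
`φ ∈ X` satisfies `‖φ‖_∞ ≤ C(t) ‖∇φ‖₂^{2/t} (1 + ‖∇φ‖₂^{2/N})`. -/
theorem stmt_1 (N : ℕ) (hN : 3 ≤ N) (t : ℝ)
    (ht : max (N : ℝ) (2 * N / ((N : ℝ) - 2)) < t) :
    ∃ C : ℝ, 0 < C ∧ ∀ φ : Euc N → ℝ, memX N φ → ∀ x : Euc N,
      |φ x| ≤ C * gradNorm2 N φ ^ (2 / t) * (1 + gradNorm2 N φ ^ (2 / (N : ℝ))) := by
  obtain ⟨C, hC, h⟩ := stmt_1_general (volume : Measure (Euc N)) (by simpa) 1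
  simp only [finrank_euclideanSpace_fin, ← norm_gradient] at h
  exact ⟨C, hC, fun φ hφ => h t ((le_max_left _ _).trans ht.le) φ hφ.1 hφ.2.1 hφ.2.2⟩
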